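/- Every causal net is safe: for a causal net C = (B, L, E, m0), every marking reachable from the initial marking m0 by a firing sequence is a set, i.e., assigns at most one token to each condition. -/

import Mathlib

/-- A transition of a P/T net: a triple (pre-set, label, post-set). -/
structure PNTrans (S A : Type) where
  pre : Multiset S
  label : A
  post : Multiset S
deriving DecidableEq

/-- A P/T Petri net over places `S` and labels `A`: a finite set of transitions,
each with a nonempty pre-set. -/
structure PetriNet (S A : Type) [DecidableEq S] [DecidableEq A] where
  T : Finset (PNTrans S A)
  pre_ne : ∀ t ∈ T, t.pre ≠ 0

/-- The additive closure `R⊕` of a place relation `R`: the least relation on markings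
containing `(θ, θ)` and closed under adding `R`-related places on both sides. -/
inductive AddClosure {S : Type} (R : S → S → Prop) : Multiset S → Multiset S → Prop
  | zero : AddClosure R 0 0
  | cons {s1 s2 : S} {m1 m2 : Multiset S} :
      R s1 s2 → AddClosure R m1 m2 → AddClosure R (s1 ::ₘ m1) (s2 ::ₘ m2)

/-- `Fires N m t m'` : transition `t` of `N` is enabled at marking `m` and its firing
produces `m' = (m ⊖ pre(t)) ⊕ post(t)`. -/
def Fires {S A : Type} [DecidableEq S] [DecidableEq A]
    (N : PetriNet S A) (m : Multiset S) (t : PNTrans S A) (m' : Multiset S) : Prop :=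
  t ∈ N.T ∧ t.pre ≤ m ∧ m' = m - t.pre + t.post

/-- A place bisimulation on `N`. -/
def IsPlaceBisim {S A : Type} [DecidableEq S] [DecidableEq A]
    (N : PetriNet S A) (R : S → S → Prop) : Prop :=
  ∀ m1 m2, AddClosure R m1 m2 →
    (∀ t1 m1', Fires N m1 t1 m1' →
      ∃ t2 m2', Fires N m2 t2 m2' ∧ AddClosure R t1.pre t2.pre ∧
        t1.label = t2.label ∧ AddClosure R t1.post t2.post ∧ AddClosure R m1' m2') ∧
    (∀ t2 m2', Fires N m2 t2 m2' →
      ∃ t1 m1', Fires N m1 t1 m1' ∧ AddClosure R t1.pre t2.pre ∧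
        t1.label = t2.label ∧ AddClosure R t1.post t2.post ∧ AddClosure R m1' m2')

/-- Place bisimilarity `m1 ~p m2`. -/
def PlaceBisimilar {S A : Type} [DecidableEq S] [DecidableEq A]
    (N : PetriNet S A) (m1 m2 : Multiset S) : Prop :=
  ∃ R : S → S → Prop, IsPlaceBisim N R ∧ AddClosure R m1 m2

/-- An interleaving bisimulation on the markings of `N`. -/
def IsIntBisim {S A : Type} [DecidableEq S] [DecidableEq A]
    (N : PetriNet S A) (Q : Multiset S → Multiset S → Prop) : Prop :=
  ∀ m1 m2, Q m1 m2 →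
    (∀ t1 m1', Fires N m1 t1 m1' →
      ∃ t2 m2', Fires N m2 t2 m2' ∧ t1.label = t2.label ∧ Q m1' m2') ∧
    (∀ t2 m2', Fires N m2 t2 m2' →
      ∃ t1 m1', Fires N m1 t1 m1' ∧ t1.label = t2.label ∧ Q m1' m2')

/-- Interleaving bisimilarity `m1 ~int m2`. -/
def IntBisimilar {S A : Type} [DecidableEq S] [DecidableEq A]
    (N : PetriNet S A) (m1 m2 : Multiset S) : Prop :=
  ∃ Q, IsIntBisim N Q ∧ Q m1 m2

/-- First projection of a linking. -/
def lproj1 {S : Type} (l : Multiset (S × S)) : Multiset S := l.map Prod.fst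

/-- Second projection of a linking. -/
def lproj2 {S : Type} (l : Multiset (S × S)) : Multiset S := l.map Prod.snd

/-- A structure-preserving bisimulation on `N`: a set of linkings. -/
def IsSpBisim {S A : Type} [DecidableEq S] [DecidableEq A]
    (N : PetriNet S A) (R : Set (Multiset (S × S))) : Prop :=
  ∀ l ∈ R, ∀ c ≤ l,
    (∀ t1 ∈ N.T, t1.pre = lproj1 c →
      ∃ t2 ∈ N.T, t1.label = t2.label ∧ t2.pre = lproj2 c ∧
        ∃ cb : Multiset (S × S), t1.post = lproj1 cb ∧ t2.post = lproj2 cb ∧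
          l - c + cb ∈ R) ∧
    (∀ t2 ∈ N.T, t2.pre = lproj2 c →
      ∃ t1 ∈ N.T, t1.label = t2.label ∧ t1.pre = lproj1 c ∧
        ∃ cb : Multiset (S × S), t1.post = lproj1 cb ∧ t2.post = lproj2 cb ∧
          l - c + cb ∈ R)

/-- Structure-preserving bisimilarity `m1 ~sp m2`. -/
def SpBisimilar {S A : Type} [DecidableEq S] [DecidableEq A]
    (N : PetriNet S A) (m1 m2 : Multiset S) : Prop :=
  ∃ (R : Set (Multiset (S × S))) (l : Multiset (S × S)),
    IsSpBisim N R ∧ l ∈ R ∧ lproj1 l = m1 ∧ lproj2 l = m2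

/-- The flow relation of a net with events `events`, over the disjoint union of
conditions and events. -/
def flowR {B L : Type} (events : Finset (PNTrans B L)) :
    (B ⊕ PNTrans B L) → (B ⊕ PNTrans B L) → Prop
  | Sum.inl b, Sum.inr e => e ∈ events ∧ b ∈ e.pre
  | Sum.inr e, Sum.inl b => e ∈ events ∧ b ∈ e.post
  | _, _ => False

/-- A causal net: a finite, acyclic marked net whose conditions are unbranched and
whose arcs all have weight 1; its initial marking is the set of conditions with empty
pre-set. -/
structure CausalNet (B L : Type) [DecidableEq B] where
  conds : Finset B
  events : Finset (PNTrans B L)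
  pre_mem : ∀ e ∈ events, ∀ b ∈ e.pre, b ∈ conds
  post_mem : ∀ e ∈ events, ∀ b ∈ e.post, b ∈ conds
  pre_ne : ∀ e ∈ events, e.pre ≠ 0
  acyclic : ∀ x, ¬ Relation.TransGen (flowR events) x x
  unbranched_in : ∀ b ∈ conds, (events.filter fun e => b ∈ e.post).card ≤ 1
  unbranched_out : ∀ b ∈ conds, (events.filter fun e => b ∈ e.pre).card ≤ 1
  weight_pre : ∀ e ∈ events, ∀ b : B, e.pre.count b ≤ 1
  weight_post : ∀ e ∈ events, ∀ b : B, e.post.count b ≤ 1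

/-- `Min(C)`: the conditions with empty pre-set (this set is also the initial marking). -/
def CausalNet.minSet {B L : Type} [DecidableEq B] (C : CausalNet B L) : Finset B :=
  C.conds.filter fun b => ∀ e ∈ C.events, b ∉ e.post

/-- `Max(C)`: the conditions with empty post-set. -/
def CausalNet.maxSet {B L : Type} [DecidableEq B] (C : CausalNet B L) : Finset B :=
  C.conds.filter fun b => ∀ e ∈ C.events, b ∉ e.pre

/-- `IsFolding N m0 C ρ` : `ρ` is a folding from the causal net `C` into the marked net
`N(m0)`; it is type- and label-preserving, maps the initial marking of `C` onto `m0`, and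
commutes with pre-sets and post-sets of events (so each event is mapped to the transition
of `N` with the same label and the projected pre- and post-sets).  `(C, ρ)` is then a
process of `N(m0)`. -/
def IsFolding {S A B : Type} [DecidableEq S] [DecidableEq A] [DecidableEq B]
    (N : PetriNet S A) (m0 : Multiset S) (C : CausalNet B A) (ρ : B → S) : Prop :=
  C.minSet.val.map ρ = m0 ∧
  ∀ e ∈ C.events,
    ({ pre := e.pre.map ρ, label := e.label, post := e.post.map ρ } : PNTrans S A) ∈ N.T

/-- `C1 [e⟩ C2` : the causal net `C1` moves in one step to `C2` through the event `e`. -/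
def CNMove {B L : Type} [DecidableEq B] [DecidableEq L]
    (C1 : CausalNet B L) (e : PNTrans B L) (C2 : CausalNet B L) : Prop :=
  (∀ b ∈ e.pre, b ∈ C1.maxSet) ∧
  C2.events = insert e C1.events ∧
  C2.conds = C1.conds ∪ e.post.toFinset

/-- `(C1, ρ1) →e (C2, ρ2)` : the process `(C1, ρ1)` of `N(m0)` moves in one step to the
process `(C2, ρ2)` of `N(m0)` through the event `e`, with `ρ1 ⊆ ρ2`. -/
def ProcMove {S A B : Type} [DecidableEq S] [DecidableEq A] [DecidableEq B]
    (N : PetriNet S A) (C1 : CausalNet B A) (ρ1 : B → S) (e : PNTrans B A)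
    (C2 : CausalNet B A) (ρ2 : B → S) : Prop :=
  (∃ m0 : Multiset S, IsFolding N m0 C1 ρ1 ∧ IsFolding N m0 C2 ρ2) ∧
  CNMove C1 e C2 ∧
  ∀ b ∈ C1.conds, ρ1 b = ρ2 b

/-- A causal-net bisimulation on `N`: a relation of triples `(ρ1, C, ρ2)` made of
processes, in which forward moves of either side can be matched by the other. -/
def IsCNBisim {S A B : Type} [DecidableEq S] [DecidableEq A] [DecidableEq B]
    (N : PetriNet S A) (R : (B → S) → CausalNet B A → (B → S) → Prop) : Prop :=
  ∀ ρ1 C ρ2, R ρ1 C ρ2 →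
    (∃ m01, IsFolding N m01 C ρ1) ∧ (∃ m02, IsFolding N m02 C ρ2) ∧
    (∀ e C' ρ1', ProcMove N C ρ1 e C' ρ1' →
      ∃ ρ2', ProcMove N C ρ2 e C' ρ2' ∧ R ρ1' C' ρ2') ∧
    (∀ e C' ρ2', ProcMove N C ρ2 e C' ρ2' →
      ∃ ρ1', ProcMove N C ρ1 e C' ρ1' ∧ R ρ1' C' ρ2')

/-- A hereditary causal-net bisimulation: a causal-net bisimulation that also matches
backward moves (undoing of events). -/
def IsHCNBisim {S A B : Type} [DecidableEq S] [DecidableEq A] [DecidableEq B]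
    (N : PetriNet S A) (R : (B → S) → CausalNet B A → (B → S) → Prop) : Prop :=
  IsCNBisim N R ∧
  ∀ ρ1 C ρ2, R ρ1 C ρ2 →
    (∀ e C' ρ1', ProcMove N C' ρ1' e C ρ1 →
      ∃ ρ2', ProcMove N C' ρ2' e C ρ2 ∧ R ρ1' C' ρ2') ∧
    (∀ e C' ρ2', ProcMove N C' ρ2' e C ρ2 →
      ∃ ρ1', ProcMove N C' ρ1' e C ρ1 ∧ R ρ1' C' ρ2')

/-- Causal-net bisimilarity `m1 ~cn m2`: a causal-net bisimulation contains a triple over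
an event-less causal net `C⁰` with `ρi(Min(C⁰)) = ρi(Max(C⁰)) = mi`. -/
def CNBisimilar {S A : Type} [DecidableEq S] [DecidableEq A]
    (N : PetriNet S A) (m1 m2 : Multiset S) : Prop :=
  ∃ R : (ℕ → S) → CausalNet ℕ A → (ℕ → S) → Prop, IsCNBisim N R ∧
    ∃ (ρ1 : ℕ → S) (C : CausalNet ℕ A) (ρ2 : ℕ → S), R ρ1 C ρ2 ∧
      C.events = ∅ ∧
      C.minSet.val.map ρ1 = m1 ∧ C.maxSet.val.map ρ1 = m1 ∧
      C.minSet.val.map ρ2 = m2 ∧ C.maxSet.val.map ρ2 = m2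

/-- Hereditary causal-net bisimilarity `m1 ~hcn m2`. -/
def HCNBisimilar {S A : Type} [DecidableEq S] [DecidableEq A]
    (N : PetriNet S A) (m1 m2 : Multiset S) : Prop :=
  ∃ R : (ℕ → S) → CausalNet ℕ A → (ℕ → S) → Prop, IsHCNBisim N R ∧
    ∃ (ρ1 : ℕ → S) (C : CausalNet ℕ A) (ρ2 : ℕ → S), R ρ1 C ρ2 ∧
      C.events = ∅ ∧
      C.minSet.val.map ρ1 = m1 ∧ C.maxSet.val.map ρ1 = m1 ∧
      C.minSet.val.map ρ2 = m2 ∧ C.maxSet.val.map ρ2 = m2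

/-- The causal partial order on the events of a causal net: `e1 ⪯ e2` iff there is a
path in the net from `e1` to `e2`. -/
def causalLeq {B L : Type} [DecidableEq B] (C : CausalNet B L)
    (e1 e2 : PNTrans B L) : Prop :=
  Relation.ReflTransGen (flowR C.events) (Sum.inr e1) (Sum.inr e2)

/-- `g` is an event isomorphism between the causal nets `C1` and `C2`: a label-preserving,
order-preserving bijection between their events (represented as its graph). -/
def IsEventIso {B L : Type} [DecidableEq B] (C1 C2 : CausalNet B L)
    (g : Set (PNTrans B L × PNTrans B L)) : Prop :=
  (∀ p ∈ g, p.1 ∈ C1.events ∧ p.2 ∈ C2.events) ∧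
  (∀ e1 ∈ C1.events, ∃! e2 : PNTrans B L, (e1, e2) ∈ g) ∧
  (∀ e2 ∈ C2.events, ∃! e1 : PNTrans B L, (e1, e2) ∈ g) ∧
  (∀ p ∈ g, PNTrans.label (Prod.fst p) = PNTrans.label (Prod.snd p)) ∧
  (∀ p ∈ g, ∀ q ∈ g, (causalLeq C1 p.1 q.1 ↔ causalLeq C2 p.2 q.2))

/-- A fully concurrent bisimulation on `N`: a relation of triples `(π1, g, π2)` where
`πi = (Ci, ρi)` are processes and `g` is an event isomorphism between `C1` and `C2`. -/
def IsFCBisim {S A B : Type} [DecidableEq S] [DecidableEq A] [DecidableEq B]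
    (N : PetriNet S A)
    (R : CausalNet B A → (B → S) → Set (PNTrans B A × PNTrans B A) →
         CausalNet B A → (B → S) → Prop) : Prop :=
  ∀ C1 ρ1 g C2 ρ2, R C1 ρ1 g C2 ρ2 →
    (∃ m01, IsFolding N m01 C1 ρ1) ∧ (∃ m02, IsFolding N m02 C2 ρ2) ∧
    IsEventIso C1 C2 g ∧
    (∀ e1 C1' ρ1', ProcMove N C1 ρ1 e1 C1' ρ1' →
      ∃ e2 C2' ρ2', ProcMove N C2 ρ2 e2 C2' ρ2' ∧
        R C1' ρ1' (g ∪ {(e1, e2)}) C2' ρ2') ∧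
    (∀ e2 C2' ρ2', ProcMove N C2 ρ2 e2 C2' ρ2' →
      ∃ e1 C1' ρ1', ProcMove N C1 ρ1 e1 C1' ρ1' ∧
        R C1' ρ1' (g ∪ {(e1, e2)}) C2' ρ2')

/-- A hereditary fully concurrent bisimulation: a fully concurrent bisimulation that also
matches backward moves, removing the corresponding pair from the event isomorphism. -/
def IsHFCBisim {S A B : Type} [DecidableEq S] [DecidableEq A] [DecidableEq B]
    (N : PetriNet S A)
    (R : CausalNet B A → (B → S) → Set (PNTrans B A × PNTrans B A) →
         CausalNet B A → (B → S) → Prop) : Prop :=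
  IsFCBisim N R ∧
  ∀ C1 ρ1 g C2 ρ2, R C1 ρ1 g C2 ρ2 →
    (∀ e1 C1' ρ1', ProcMove N C1' ρ1' e1 C1 ρ1 →
      ∃ e2 C2' ρ2', ProcMove N C2' ρ2' e2 C2 ρ2 ∧
        R C1' ρ1' (g \ {(e1, e2)}) C2' ρ2') ∧
    (∀ e2 C2' ρ2', ProcMove N C2' ρ2' e2 C2 ρ2 →
      ∃ e1 C1' ρ1', ProcMove N C1' ρ1' e1 C1 ρ1 ∧
        R C1' ρ1' (g \ {(e1, e2)}) C2' ρ2')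

/-- Hereditary fully concurrent bisimilarity `m1 ~hfc m2`. -/
def HFCBisimilar {S A : Type} [DecidableEq S] [DecidableEq A]
    (N : PetriNet S A) (m1 m2 : Multiset S) : Prop :=
  ∃ R : CausalNet ℕ A → (ℕ → S) → Set (PNTrans ℕ A × PNTrans ℕ A) →
        CausalNet ℕ A → (ℕ → S) → Prop,
    IsHFCBisim N R ∧
    ∃ (C1 : CausalNet ℕ A) (ρ1 : ℕ → S) (C2 : CausalNet ℕ A) (ρ2 : ℕ → S),
      R C1 ρ1 ∅ C2 ρ2 ∧ C1.events = ∅ ∧ C2.events = ∅ ∧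
      C1.minSet.val.map ρ1 = m1 ∧ C1.maxSet.val.map ρ1 = m1 ∧
      C2.minSet.val.map ρ2 = m2 ∧ C2.maxSet.val.map ρ2 = m2

/-- One firing step in a causal net, seen as a P/T net whose transitions are its events. -/
def cnStep {B L : Type} [DecidableEq B] (C : CausalNet B L)
    (m m' : Multiset B) : Prop :=
  ∃ e ∈ C.events, e.pre ≤ m ∧ m' = m - e.pre + e.post

/-!
Every event fires at most once along a firing sequence, by induction on its length. If `σ` is the
set of events fired so far, the marking equation `m + ∑ e ∈ σ, pre e = m₀ + ∑ e ∈ σ, post e` holds,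
and its right-hand side is a set, since a condition either is initially marked or has a single
producer. So `m` is a set disjoint from the places consumed so far; an event enabled at `m`, having
a nonempty pre-set inside `m`, therefore does not belong to `σ`.
-/

section UniqueSources

variable {B L : Type} {E : Set (PNTrans B L)} {m₀ m : Multiset B} {σ : Multiset (PNTrans B L)}
  {e : PNTrans B L}

/-- The one-step reachability relation between markings of the net with event set `E`. -/
def FiringStep [DecidableEq B] (E : Set (PNTrans B L)) (m m' : Multiset B) : Prop :=
  ∃ e ∈ E, e.pre ≤ m ∧ m' = m - e.pre + e.post

/-- Backward unbranchedness of a marked net: a place receives at most one token from the initial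
marking `m₀` and one firing of each event of `E` together. -/
structure HasUniqueSources (E : Set (PNTrans B L)) (m₀ : Multiset B) : Prop where
  nodup_init : m₀.Nodup
  nodup_post : ∀ e ∈ E, e.post.Nodup
  pairwiseDisjoint_post : E.PairwiseDisjoint PNTrans.post
  disjoint_init_post : ∀ e ∈ E, Disjoint m₀ e.post

/-- A history of `m`: a multiset `σ` of pairwise distinct events, meant as those fired on the way
from `m₀` to `m`. Only the marking equation is recorded, not an order of firing; it is stated
additively to avoid truncated subtraction. -/
structure IsHistory (E : Set (PNTrans B L)) (m₀ m : Multiset B) (σ : Multiset (PNTrans B L)) :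
    Prop where
  subset : ∀ e ∈ σ, e ∈ E
  nodup : σ.Nodup
  marking_eq : m + σ.bind PNTrans.pre = m₀ + σ.bind PNTrans.post

theorem HasUniqueSources.nodup_add_bind_post (h₀ : HasUniqueSources E m₀)
    (hσE : ∀ e ∈ σ, e ∈ E) (hσ : σ.Nodup) : (m₀ + σ.bind PNTrans.post).Nodup := by
  refine Multiset.nodup_add.mpr ⟨h₀.nodup_init, Multiset.nodup_bind.mpr ⟨?_, ?_⟩, ?_⟩
  · exact fun e he => h₀.nodup_post e (hσE e he)
  · exact hσ.pairwise fun e he e' he' hne =>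
      h₀.pairwiseDisjoint_post (hσE e he) (hσE e' he') hne
  · refine Multiset.disjoint_left.mpr fun hb hb_post => ?_
    obtain ⟨e, he, hbe⟩ := Multiset.mem_bind.mp hb_post
    exact Multiset.disjoint_left.mp (h₀.disjoint_init_post e (hσE e he)) hb hbe

namespace IsHistory

theorem zero : IsHistory E m₀ m₀ 0 where
  subset := by simp
  nodup := Multiset.nodup_zero
  marking_eq := by simp

theorem nodup_add_bind_pre (h : IsHistory E m₀ m σ) (h₀ : HasUniqueSources E m₀) :
    (m + σ.bind PNTrans.pre).Nodup :=
  h.marking_eq ▸ h₀.nodup_add_bind_post h.subset h.nodup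

theorem notMem_of_enabled (h : IsHistory E m₀ m σ) (h₀ : HasUniqueSources E m₀)
    (hpre : e.pre ≠ 0) (hen : e.pre ≤ m) : e ∉ σ := by
  intro he
  obtain ⟨b, hb⟩ := Multiset.exists_mem_of_ne_zero hpre
  have marked_disjoint_consumed : Disjoint m (σ.bind PNTrans.pre) :=
    (Multiset.nodup_add.mp (h.nodup_add_bind_pre h₀)).2.2
  exact Multiset.disjoint_left.mp marked_disjoint_consumed (Multiset.mem_of_le hen hb)
    (Multiset.mem_bind.mpr ⟨e, he, hb⟩)

theorem cons [DecidableEq B] (h : IsHistory E m₀ m σ) (heE : e ∈ E) (heσ : e ∉ σ)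
    (hen : e.pre ≤ m) : IsHistory E m₀ (m - e.pre + e.post) (e ::ₘ σ) where
  subset := Multiset.forall_mem_cons.mpr ⟨heE, h.subset⟩
  nodup := Multiset.nodup_cons.mpr ⟨heσ, h.nodup⟩
  marking_eq := by
    calc m - e.pre + e.post + (e ::ₘ σ).bind PNTrans.pre
        = (m - e.pre + e.pre) + σ.bind PNTrans.pre + e.post := by
          rw [Multiset.cons_bind]; ac_rfl
      _ = m₀ + σ.bind PNTrans.post + e.post := by
          rw [Multiset.sub_add_cancel hen, h.marking_eq]
      _ = m₀ + (e ::ₘ σ).bind PNTrans.post := by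
          rw [Multiset.cons_bind]; ac_rfl

end IsHistory

theorem HasUniqueSources.exists_isHistory [DecidableEq B] (h₀ : HasUniqueSources E m₀)
    (hpre : ∀ e ∈ E, e.pre ≠ 0) (hm : Relation.ReflTransGen (FiringStep E) m₀ m) :
    ∃ σ, IsHistory E m₀ m σ := by
  induction hm with
  | refl => exact ⟨0, .zero⟩
  | tail _ hstep ih =>
    obtain ⟨σ, hσ⟩ := ih
    obtain ⟨e, heE, hen, rfl⟩ := hstep
    exact ⟨e ::ₘ σ, hσ.cons heE (hσ.notMem_of_enabled h₀ (hpre e heE) hen) hen⟩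

theorem causalNet_safe_general [DecidableEq B] (h₀ : HasUniqueSources E m₀)
    (hpre : ∀ e ∈ E, e.pre ≠ 0) (hm : Relation.ReflTransGen (FiringStep E) m₀ m) : m.Nodup := by
  obtain ⟨σ, hσ⟩ := h₀.exists_isHistory hpre hm
  exact (Multiset.nodup_add.mp (hσ.nodup_add_bind_pre h₀)).1

end UniqueSources

theorem CausalNet.eq_of_mem_post {B L : Type} [DecidableEq B] (C : CausalNet B L)
    {e e' : PNTrans B L} (he : e ∈ C.events) (he' : e' ∈ C.events) {b : B}
    (hb : b ∈ e.post) (hb' : b ∈ e'.post) : e = e' :=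
  Finset.card_le_one.mp (C.unbranched_in b (C.post_mem e he b hb))
    e (Finset.mem_filter.mpr ⟨he, hb⟩) e' (Finset.mem_filter.mpr ⟨he', hb'⟩)

theorem CausalNet.hasUniqueSources {B L : Type} [DecidableEq B] (C : CausalNet B L) :
    HasUniqueSources (C.events : Set (PNTrans B L)) C.minSet.val where
  nodup_init := C.minSet.nodup
  nodup_post e he := Multiset.nodup_iff_count_le_one.mpr (C.weight_post e he)
  pairwiseDisjoint_post _ he _ he' hne := Multiset.disjoint_left.mpr fun hb hb' =>
    hne (C.eq_of_mem_post he he' hb hb')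
  disjoint_init_post e he := Multiset.disjoint_left.mpr fun hb =>
    (Finset.mem_filter.mp hb).2 e he

/-- every causal net is safe: every marking reachable from the initial
marking assigns at most one token to each condition. -/
theorem causalNet_safe {B L : Type} [DecidableEq B] (C : CausalNet B L)
    (m : Multiset B) (h : Relation.ReflTransGen (cnStep C) C.minSet.val m) :
    ∀ b : B, m.count b ≤ 1 :=
  Multiset.nodup_iff_count_le_one.mp <|
    causalNet_safe_general C.hasUniqueSources C.pre_ne h
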